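/- Assume the SOSC holds with respect to J. Then H^D(F ∩ ∂J) = 0, i.e. μ_F(∂J) = 0, where ∂J denotes the topological boundary of J. -/

import Mathlib

open MeasureTheory Metric Filter Set
open scoped ENNReal Topology

/-!
Let `U = interior J`. Similarities of `ℝ^d` are open maps, so each `S i` maps `U` into itself. Since
`F` meets `U`, some small cell `S_w F` lies inside `U`. A point of `F \ U` therefore lies in a cell
`S_v F` with `v ≠ w` of the same length, and there it is the image of a point of `F \ U`. Hence
`H^D(F \ U) ≤ ∑_{v ≠ w} r_v^D H^D(F \ U)`, a factor smaller than `1`, and `H^D(F) < ∞` by covering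
`F` with its cells of level `n`.
-/

open scoped NNReal

section Words

variable {ι E : Type*} {n : ℕ}

/-- The composition `S_w = S_{w 0} ∘ ⋯ ∘ S_{w (n-1)}` of an iterated function system along a word
`w` of length `n`; the cells of level `n` of a set `F` are the images `wordMap S w '' F`. -/
def wordMap (S : ι → E → E) : {n : ℕ} → (Fin n → ι) → E → E
  | 0, _ => id
  | _ + 1, w => S (w 0) ∘ wordMap S (Fin.tail w)

theorem mapsTo_wordMap {S : ι → E → E} {U : Set E} (hU : ∀ i, MapsTo (S i) U U) (w : Fin n → ι) :
    MapsTo (wordMap S w) U U := by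
  induction n with
  | zero => exact mapsTo_id U
  | succ n ih => exact (hU (w 0)).comp (ih (Fin.tail w))

theorem subset_iUnion_wordMap_image {S : ι → E → E} {F : Set E} (hF : F ⊆ ⋃ i, S i '' F) (n : ℕ) :
    F ⊆ ⋃ w : Fin n → ι, wordMap S w '' F := by
  induction n with
  | zero => exact fun x hx => mem_iUnion.2 ⟨Fin.elim0, x, hx, rfl⟩
  | succ n ih =>
    intro x hx
    obtain ⟨i, y, hy, rfl⟩ := mem_iUnion.1 (hF hx)
    obtain ⟨w, z, hz, rfl⟩ := mem_iUnion.1 (ih hy)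
    exact mem_iUnion.2 ⟨Fin.cons i w, z, hz, by simp [wordMap]⟩

theorem lipschitzWith_wordMap [PseudoEMetricSpace E] {S : ι → E → E} {r : ι → ℝ≥0}
    (hS : ∀ i, LipschitzWith (r i) (S i)) (w : Fin n → ι) :
    LipschitzWith (∏ k, r (w k)) (wordMap S w) := by
  induction n with
  | zero => simpa [wordMap] using LipschitzWith.id
  | succ n ih =>
    rw [Fin.prod_univ_succ]
    exact (hS (w 0)).comp (ih (Fin.tail w))

end Words

section Cells

variable {ι E : Type*} [Fintype ι] {S : ι → E → E} {r : ι → ℝ≥0} {F : Set E}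

theorem sum_prod_rpow_words (r : ι → ℝ≥0) (D : ℝ) (n : ℕ) :
    ∑ w : Fin n → ι, (∏ k, r (w k)) ^ D = (∑ i, r i ^ D) ^ n := by
  simp_rw [Fintype.sum_pow, NNReal.finsetProd_rpow]

theorem ediam_wordMap_image_le [PseudoEMetricSpace E] (hS : ∀ i, LipschitzWith (r i) (S i))
    (F : Set E) {n : ℕ} (w : Fin n → ι) :
    ediam (wordMap S w '' F) ≤ (Finset.univ.sup r : ℝ≥0) ^ n * ediam F := by
  have ratio_le : ∏ k, r (w k) ≤ Finset.univ.sup r ^ n := by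
    simpa using Finset.prod_le_pow_card Finset.univ (fun k => r (w k)) _
      fun k _ => Finset.le_sup (Finset.mem_univ (w k))
  calc ediam (wordMap S w '' F)
      ≤ (∏ k, r (w k) : ℝ≥0) * ediam F := (lipschitzWith_wordMap hS w).ediam_image_le F
    _ ≤ (Finset.univ.sup r : ℝ≥0) ^ n * ediam F := by
      gcongr
      exact_mod_cast ratio_le

theorem sum_ediam_wordMap_image_rpow_le [PseudoEMetricSpace E] {D : ℝ}
    (hS : ∀ i, LipschitzWith (r i) (S i)) (hD : 0 ≤ D) (hrD : ∑ i, r i ^ D ≤ 1)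
    (F : Set E) (n : ℕ) :
    ∑ w : Fin n → ι, ediam (wordMap S w '' F) ^ D ≤ ediam F ^ D :=
  calc ∑ w : Fin n → ι, ediam (wordMap S w '' F) ^ D
      ≤ ∑ w : Fin n → ι, ((∏ k, r (w k) : ℝ≥0) * ediam F) ^ D := by
        gcongr with w
        exact (lipschitzWith_wordMap hS w).ediam_image_le F
    _ = ((∑ i, r i ^ D) ^ n : ℝ≥0) * ediam F ^ D := by
        simp_rw [ENNReal.mul_rpow_of_nonneg _ _ hD, ← Finset.sum_mul, ← sum_prod_rpow_words,
          ENNReal.ofNNReal_finsetSum, ENNReal.coe_rpow_of_nonneg _ hD]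
    _ ≤ ediam F ^ D := mul_le_of_le_one_left' (ENNReal.coe_le_one_iff.2 (pow_le_one' hrD n))

theorem tendsto_sup_pow_mul_ediam [PseudoEMetricSpace E] (hr : ∀ i, r i < 1)
    (hF : ediam F ≠ ⊤) :
    Tendsto (fun n : ℕ => ((Finset.univ.sup r : ℝ≥0) : ℝ≥0∞) ^ n * ediam F) atTop (𝓝 0) := by
  have sup_lt_one : Finset.univ.sup r < 1 :=
    (Finset.sup_lt_iff (bot_lt_iff_ne_bot.2 one_ne_zero)).2 fun i _ => hr i
  simpa using ENNReal.Tendsto.mul_const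
    (ENNReal.tendsto_pow_atTop_nhds_zero_of_lt_one (ENNReal.coe_lt_one_iff.2 sup_lt_one))
    (Or.inr hF)

end Cells

theorem exists_wordMap_image_subset {ι E : Type*} [Finite ι] [PseudoEMetricSpace E] {S : ι → E → E}
    {r : ι → ℝ≥0} {F : Set E} (hS : ∀ i, LipschitzWith (r i) (S i))
    (hr : ∀ i, r i < 1) (hF : ediam F ≠ ⊤) (hF_sub : F ⊆ ⋃ i, S i '' F) {U : Set E}
    (hU : IsOpen U) (hFU : (F ∩ U).Nonempty) :
    ∃ (n : ℕ) (w : Fin n → ι), wordMap S w '' F ⊆ U := by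
  have := Fintype.ofFinite ι
  obtain ⟨x, hxF, hxU⟩ := hFU
  obtain ⟨ε, hε, hball⟩ := EMetric.isOpen_iff.1 hU x hxU
  obtain ⟨n, hn⟩ := ((tendsto_sup_pow_mul_ediam hr hF).eventually_lt_const hε).exists
  obtain ⟨w, hxw⟩ := mem_iUnion.1 (subset_iUnion_wordMap_image hF_sub n hxF)
  refine ⟨n, w, fun y hy => hball ?_⟩
  calc edist y x ≤ ediam (wordMap S w '' F) := edist_le_ediam_of_mem hy hxw
    _ ≤ (Finset.univ.sup r : ℝ≥0) ^ n * ediam F := ediam_wordMap_image_le hS F w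
    _ < ε := hn

section HausdorffMeasure

variable {ι E : Type*} [EMetricSpace E] [MeasurableSpace E] [BorelSpace E] {D : ℝ}

theorem hausdorffMeasure_eq_zero_of_subset_biUnion_image {g : ι → E → E} {ρ : ι → ℝ≥0}
    (hg : ∀ i, LipschitzWith (ρ i) (g i)) (hD : 0 ≤ D) {t : Finset ι}
    (hρ : ∑ i ∈ t, ρ i ^ D < 1) {A : Set E} (hA : μH[D] A ≠ ⊤)
    (hA_sub : A ⊆ ⋃ i ∈ t, g i '' A) : μH[D] A = 0 := by
  by_contra hA_pos
  have le_mul : μH[D] A ≤ (∑ i ∈ t, ρ i ^ D : ℝ≥0) * μH[D] A :=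
    calc μH[D] A ≤ μH[D] (⋃ i ∈ t, g i '' A) := measure_mono hA_sub
      _ ≤ ∑ i ∈ t, μH[D] (g i '' A) := measure_biUnion_finset_le t _
      _ ≤ ∑ i ∈ t, (ρ i : ℝ≥0∞) ^ D * μH[D] A := by
        gcongr with i
        exact (hg i).hausdorffMeasure_image_le hD A
      _ = (∑ i ∈ t, ρ i ^ D : ℝ≥0) * μH[D] A := by
        rw [← Finset.sum_mul]
        simp_rw [ENNReal.ofNNReal_finsetSum, ENNReal.coe_rpow_of_nonneg _ hD]
  have mul_lt : (∑ i ∈ t, ρ i ^ D : ℝ≥0) * μH[D] A < 1 * μH[D] A :=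
    ENNReal.mul_lt_mul_left hA_pos hA (ENNReal.coe_lt_one_iff.2 hρ)
  exact (le_mul.trans_lt mul_lt).ne (one_mul _).symm

variable [Fintype ι] {S : ι → E → E} {r : ι → ℝ≥0} {F : Set E}

theorem hausdorffMeasure_le_ediam_rpow (hS : ∀ i, LipschitzWith (r i) (S i)) (hr : ∀ i, r i < 1)
    (hD : 0 ≤ D) (hrD : ∑ i, r i ^ D ≤ 1) (hF : ediam F ≠ ⊤) (hF_sub : F ⊆ ⋃ i, S i '' F) :
    μH[D] F ≤ ediam F ^ D :=
  calc μH[D] F ≤ liminf (fun n => ∑ w : Fin n → ι, ediam (wordMap S w '' F) ^ D) atTop :=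
        Measure.hausdorffMeasure_le_liminf_sum D F _ (tendsto_sup_pow_mul_ediam hr hF) _
          (Eventually.of_forall fun _ => ediam_wordMap_image_le hS F)
          (Eventually.of_forall (subset_iUnion_wordMap_image hF_sub))
    _ ≤ liminf (fun _ : ℕ => ediam F ^ D) atTop :=
        liminf_le_liminf (Eventually.of_forall (sum_ediam_wordMap_image_rpow_le hS hD hrD F))
    _ = ediam F ^ D := liminf_const _

theorem hausdorffMeasure_diff_eq_zero_of_mapsTo (hS : ∀ i, LipschitzWith (r i) (S i))
    (hr_pos : ∀ i, 0 < r i) (hr : ∀ i, r i < 1) (hD : 0 ≤ D) (hrD : ∑ i, r i ^ D ≤ 1)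
    (hF : ediam F ≠ ⊤) (hF_sub : F ⊆ ⋃ i, S i '' F) {U : Set E} (hU : IsOpen U)
    (hSU : ∀ i, MapsTo (S i) U U) (hFU : (F ∩ U).Nonempty) :
    μH[D] (F \ U) = 0 := by
  classical
  obtain ⟨n, w, hw⟩ := exists_wordMap_image_subset hS hr hF hF_sub hU hFU
  have sum_erase_lt : ∑ v ∈ Finset.univ.erase w, (∏ k, r (v k)) ^ D < 1 :=
    calc ∑ v ∈ Finset.univ.erase w, (∏ k, r (v k)) ^ D
        < ∑ v : Fin n → ι, (∏ k, r (v k)) ^ D :=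
          Finset.sum_erase_lt_of_pos (Finset.mem_univ w)
            (NNReal.rpow_pos (Finset.prod_pos fun k _ => hr_pos (w k)))
      _ = (∑ i, r i ^ D) ^ n := sum_prod_rpow_words r D n
      _ ≤ 1 := pow_le_one' hrD n
  have measure_ne_top : μH[D] (F \ U) ≠ ⊤ :=
    ne_top_of_le_ne_top (ENNReal.rpow_ne_top_of_nonneg hD hF)
      ((measure_mono sdiff_subset).trans (hausdorffMeasure_le_ediam_rpow hS hr hD hrD hF hF_sub))
  refine hausdorffMeasure_eq_zero_of_subset_biUnion_image (lipschitzWith_wordMap hS) hD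
    sum_erase_lt measure_ne_top ?_
  rintro x ⟨hxF, hxU⟩
  obtain ⟨v, y, hy, rfl⟩ := mem_iUnion.1 (subset_iUnion_wordMap_image hF_sub n hxF)
  have v_ne_w : v ≠ w := by
    rintro rfl
    exact hxU (hw ⟨y, hy, rfl⟩)
  have y_notMem : y ∉ U := fun hyU => hxU (mapsTo_wordMap hSU v hyU)
  exact mem_biUnion (Finset.mem_erase.2 ⟨v_ne_w, Finset.mem_univ v⟩) ⟨y, ⟨hy, y_notMem⟩, rfl⟩

end HausdorffMeasure

section Similarity

variable {E : Type*} [NormedAddCommGroup E] [NormedSpace ℝ E] [StrictConvexSpace ℝ E]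
  [FiniteDimensional ℝ E]

theorem isOpenMap_of_dist_eq_mul {f : E → E} {c : ℝ} (hc : 0 < c)
    (hf : ∀ x y, dist (f x) (f y) = c * dist x y) : IsOpenMap f := by
  have isometry_smul : Isometry fun x => c⁻¹ • f x := Isometry.of_dist_eq fun x y => by
    rw [dist_smul₀, hf, Real.norm_of_nonneg (inv_nonneg.2 hc.le), inv_mul_cancel_left₀ hc.ne']
  let _ : Inhabited E := ⟨0⟩
  let e := isometry_smul.affineIsometryOfStrictConvexSpace.toAffineIsometryEquiv rfl
  have f_eq : f = (c • ·) ∘ e := funext fun x => (smul_inv_smul₀ hc.ne' (f x)).symm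
  rw [f_eq]
  exact (isOpenMap_smul₀ hc.ne').comp e.toHomeomorph.isOpenMap

theorem statement15_general [MeasurableSpace E] [BorelSpace E] {ι : Type*} [Fintype ι]
    {S : ι → E → E} {r : ι → ℝ} (hr : ∀ i, r i ∈ Ioo (0 : ℝ) 1)
    (hS : ∀ i x y, dist (S i x) (S i y) = r i * dist x y)
    {F : Set E} (hF : Bornology.IsBounded F) (hF_sub : F ⊆ ⋃ i, S i '' F)
    {D : ℝ} (hD : 0 ≤ D) (hrD : ∑ i, r i ^ D ≤ 1)
    {J : Set E} (hJ : ∀ i, S i '' J ⊆ J) (hFJ : (F ∩ interior J).Nonempty) :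
    μH[D] (F \ interior J) = 0 := by
  lift r to ι → ℝ≥0 using fun i => (hr i).1.le
  have lipschitz (i) : LipschitzWith (r i) (S i) :=
    LipschitzWith.of_dist_le_mul fun x y => (hS i x y).le
  have mapsTo_interior (i) : MapsTo (S i) (interior J) (interior J) :=
    (isOpenMap_of_dist_eq_mul (hr i).1 (hS i)).mapsTo_interior (mapsTo_iff_image_subset.2 (hJ i))
  have sum_rpow_le : ∑ i, r i ^ D ≤ 1 := by
    simp only at hrD
    exact_mod_cast hrD
  exact hausdorffMeasure_diff_eq_zero_of_mapsTo lipschitz (fun i => (hr i).1) (fun i => (hr i).2)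
    hD sum_rpow_le hF.ediam_ne_top hF_sub isOpen_interior mapsTo_interior hFJ

end Similarity

/-- Under the strong open set condition with respect to `J`, the
boundary of `J` is a null set for the `D`-dimensional Hausdorff measure on `F`:
`H^D(F ∩ ∂J) = 0` (equivalently `μ_F(∂J) = 0`). -/
theorem statement15 (d N : ℕ) (hd : 1 ≤ d) (hN : 2 ≤ N)
    (S : Fin N → EuclideanSpace ℝ (Fin d) → EuclideanSpace ℝ (Fin d))
    (r : Fin N → ℝ) (hr : ∀ i, r i ∈ Set.Ioo (0 : ℝ) 1)
    (hS : ∀ i x y, dist (S i x) (S i y) = r i * dist x y)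
    (F : Set (EuclideanSpace ℝ (Fin d)))
    (hF_ne : F.Nonempty) (hF_cpt : IsCompact F)
    (hF_self : F = ⋃ i, S i '' F)
    (D : ℝ) (hD : 0 < D) (hD_dim : ∑ i, r i ^ D = 1)
    (J : Set (EuclideanSpace ℝ (Fin d))) (hJ_cpt : IsCompact J)
    (hJ_reg : J = closure (interior J))
    (hJ_sub : ∀ i, S i '' J ⊆ J)
    (hJ_disj : ∀ i j, i ≠ j → Disjoint (S i '' interior J) (S j '' interior J))
    (hSOSC : (F ∩ interior J).Nonempty) :
    μH[D] (F ∩ frontier J) = 0 :=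
  measure_mono_null (inter_subset_inter_right F fun _ hx => hx.2) <|
    statement15_general hr hS hF_cpt.isBounded hF_self.subset hD.le hD_dim.le hJ_sub hSOSC
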